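/- Let $\varphi$ be a parabolic automorphism of $\mathbb{D}$ with unique fixed point $a \in \partial\mathbb{D}$. For every $\delta \in (0,1)$ there exists $z_0 \in \mathbb{D}$ such that the orbit points $\varphi_j(z_0)$, $j \in \mathbb{Z}$, are pseudo-hyperbolically separated: $d(\varphi_{j_1}(z_0), \varphi_{j_2}(z_0)) > \delta$ whenever $j_1 \neq j_2$. -/

import Mathlib

open Metric

/-- The `k`-th iterate of `φ` for `k ∈ ℤ`, where negative iterates use the inverse `φinv`. -/
noncomputable def iterZ (φ φinv : ℂ → ℂ) (k : ℤ) : ℂ → ℂ :=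
  if 0 ≤ k then φ^[k.toNat] else φinv^[(-k).toNat]

/-- Disc Moebius map. -/
noncomputable def mob (b z : ℂ) : ℂ := (z - b) / (1 - (starRingEnd ℂ) b * z)

lemma mob_den {b z : ℂ} (hb : ‖b‖ < 1) (hz : ‖z‖ ≤ 1) : 1 - (starRingEnd ℂ) b * z ≠ 0 := by
  intro h
  have h1 : (starRingEnd ℂ) b * z = 1 := (sub_eq_zero.mp h).symm
  have h2 : ‖b‖ * ‖z‖ = 1 := by
    have := congrArg norm h1
    simpa using this
  nlinarith [norm_nonneg b, norm_nonneg z]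

lemma mob_maps {b z : ℂ} (hb : ‖b‖ < 1) (hz : ‖z‖ < 1) : ‖mob b z‖ < 1 := by
  have hd := mob_den hb hz.le
  rw [mob, norm_div, div_lt_one (norm_pos_iff.mpr hd)]
  refine lt_of_pow_lt_pow_left₀ 2 (norm_nonneg _) ?_
  have h1 : ‖b‖ ^ 2 < 1 := by nlinarith [norm_nonneg b]
  have h2 : ‖z‖ ^ 2 < 1 := by nlinarith [norm_nonneg z]
  have h3 := mul_pos (sub_pos.mpr h1) (sub_pos.mpr h2)
  simp only [← Complex.normSq_eq_norm_sq, Complex.normSq_apply] at *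
  simp at *
  nlinarith

lemma mob_inv {b z : ℂ} (hb : ‖b‖ < 1) (hz : ‖z‖ < 1) : mob (-b) (mob b z) = z := by
  have hd := mob_den hb hz.le
  have hb' : ‖-b‖ < 1 := by simpa using hb
  have hd2 := mob_den hb' (mob_maps hb hz).le
  have hd3 := mob_den hb hb.le
  rw [mob, div_eq_iff hd2]
  have e : mob b z * (1 - (starRingEnd ℂ) b * z) = z - b := div_mul_cancel₀ _ hd
  simp only [map_neg]
  linear_combination e

lemma mob_diff {b : ℂ} (hb : ‖b‖ < 1) : DifferentiableOn ℂ (mob b) (ball 0 1) := by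
  unfold mob
  refine DifferentiableOn.div (by fun_prop) (by fun_prop) ?_
  intro z hz
  exact mob_den hb (by simpa using (mem_ball_zero_iff.mp hz).le)

lemma aut_form (φ φinv : ℂ → ℂ)
    (hφ : DifferentiableOn ℂ φ (ball 0 1))
    (hφinv : DifferentiableOn ℂ φinv (ball 0 1))
    (hφm : Set.MapsTo φ (ball 0 1) (ball 0 1))
    (hφinvm : Set.MapsTo φinv (ball 0 1) (ball 0 1))
    (hleft : ∀ z ∈ ball (0 : ℂ) 1, φinv (φ z) = z)
    (hright : ∀ z ∈ ball (0 : ℂ) 1, φ (φinv z) = z) :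
    ∃ b l : ℂ, ‖b‖ < 1 ∧ ‖l‖ = 1 ∧
      ∀ z ∈ ball (0 : ℂ) 1, φ z * (1 - (starRingEnd ℂ) b * z) = l * (z - b) := by
  have h0 : (0:ℂ) ∈ ball (0:ℂ) 1 := by simp
  obtain ⟨b, hbdef⟩ : ∃ b, b = φinv 0 := ⟨_, rfl⟩
  have hb : ‖b‖ < 1 := by rw [hbdef]; exact mem_ball_zero_iff.mp (hφinvm h0)
  have hb' : ‖-b‖ < 1 := by simpa using hb
  have m1 : Set.MapsTo (mob b) (ball 0 1) (ball 0 1) := fun z hz =>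
    mem_ball_zero_iff.mpr (mob_maps hb (mem_ball_zero_iff.mp hz))
  have m2 : Set.MapsTo (mob (-b)) (ball 0 1) (ball 0 1) := fun z hz =>
    mem_ball_zero_iff.mpr (mob_maps hb' (mem_ball_zero_iff.mp hz))
  have gd : DifferentiableOn ℂ (φ ∘ mob (-b)) (ball 0 1) := hφ.comp (mob_diff hb') m2
  have hd : DifferentiableOn ℂ (mob b ∘ φinv) (ball 0 1) := (mob_diff hb).comp hφinv hφinvm
  have gm : Set.MapsTo (φ ∘ mob (-b)) (ball 0 1) (closedBall 0 1) := fun z hz =>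
    ball_subset_closedBall (hφm (m2 hz))
  have hm : Set.MapsTo (mob b ∘ φinv) (ball 0 1) (closedBall 0 1) := fun z hz =>
    ball_subset_closedBall (m1 (hφinvm hz))
  have g0 : (φ ∘ mob (-b)) 0 = 0 := by
    have : mob (-b) 0 = b := by simp [mob]
    simp only [Function.comp, this]
    rw [hbdef]
    exact hright 0 h0
  have hh0 : (mob b ∘ φinv) 0 = 0 := by simp [mob, ← hbdef]
  have hhalf : ((1/2 : ℂ)) ∈ ball (0:ℂ) 1 := by simp; norm_num
  have e1 : ‖(φ ∘ mob (-b)) (1/2)‖ ≤ ‖(1/2:ℂ)‖ :=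
    Complex.norm_le_norm_of_mapsTo_ball gd gm g0 (mem_ball_zero_iff.mp hhalf)
  have e2 : ‖(mob b ∘ φinv) ((φ ∘ mob (-b)) (1/2))‖ ≤ ‖(φ ∘ mob (-b)) (1/2)‖ :=
    Complex.norm_le_norm_of_mapsTo_ball hd hm hh0 (mem_ball_zero_iff.mp (hφm (m2 hhalf)))
  have e3 : (mob b ∘ φinv) ((φ ∘ mob (-b)) (1/2)) = 1/2 := by
    simp only [Function.comp]
    rw [hleft _ (m2 hhalf)]
    simpa using mob_inv hb' (mem_ball_zero_iff.mp hhalf)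
  rw [e3] at e2
  have e4 := le_antisymm e1 e2
  obtain ⟨l, hl, heq⟩ := Complex.affine_of_mapsTo_ball_of_exists_norm_dslope_eq_div' (R₂ := 1) gd
    (by rw [g0]; exact gm) ⟨1/2, hhalf, by
      rw [dslope_of_ne _ (by norm_num), slope_def_module, g0, sub_zero, sub_zero, norm_smul, e4]
      norm_num⟩
  refine ⟨b, l, hb, by simpa using hl, fun z hz => ?_⟩
  have h := heq (m1 hz)
  simp only [g0] at h
  simp only [Function.comp, mob_inv hb (mem_ball_zero_iff.mp hz)] at h
  have hdn := mob_den hb (mem_ball_zero_iff.mp hz).le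
  have e : mob b z * (1 - (starRingEnd ℂ) b * z) = z - b := div_mul_cancel₀ _ hdn
  rw [h, smul_eq_mul]
  linear_combination l * e

/-- Cayley transform. -/
noncomputable def cay (a z : ℂ) : ℂ := (a + z) / (a - z)

lemma cay_den {a z : ℂ} (ha : ‖a‖ = 1) (hz : ‖z‖ < 1) : a - z ≠ 0 := by
  intro h
  rw [← sub_eq_zero.mp h] at hz
  linarith

lemma cay_dist {a z w : ℂ} (ha : ‖a‖ = 1) (hz : ‖z‖ < 1) (hw : ‖w‖ < 1) :
    ‖(z - w) / (1 - (starRingEnd ℂ) w * z)‖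
      = ‖(cay a z - cay a w) / (cay a z + (starRingEnd ℂ) (cay a w))‖ := by
  have d1 := cay_den ha hz
  have d2 := cay_den ha hw
  have d2' : (starRingEnd ℂ) a - (starRingEnd ℂ) w ≠ 0 := by
    rw [← map_sub]; exact (map_ne_zero _).mpr d2
  have haa : a * (starRingEnd ℂ) a = 1 := by
    rw [Complex.mul_conj, Complex.normSq_eq_norm_sq, ha]; simp
  have h1 : cay a z - cay a w = 2 * a * (z - w) / ((a - z) * (a - w)) := by
    unfold cay; field_simp; ring
  have h2 : cay a z + (starRingEnd ℂ) (cay a w)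
      = 2 * (1 - (starRingEnd ℂ) w * z) / ((a - z) * (starRingEnd ℂ) (a - w)) := by
    unfold cay
    simp only [map_div₀, map_add, map_sub]
    field_simp
    linear_combination 2 * haa
  have hn : ‖(starRingEnd ℂ) (a - w)‖ = ‖a - w‖ := Complex.norm_conj _
  have n1 : ‖a - z‖ ≠ 0 := norm_ne_zero_iff.mpr d1
  have n2 : ‖a - w‖ ≠ 0 := norm_ne_zero_iff.mpr d2
  have n3 : ‖1 - (starRingEnd ℂ) w * z‖ ≠ 0 := norm_ne_zero_iff.mpr (mob_den hw hz.le)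
  rw [h1, h2]
  simp only [norm_div, norm_mul, hn, ha]
  field_simp

lemma parab (φ φinv : ℂ → ℂ)
    (hφc : ContinuousOn φ (closedBall 0 1))
    (hφ : DifferentiableOn ℂ φ (ball 0 1))
    (hφinv : DifferentiableOn ℂ φinv (ball 0 1))
    (hφm : Set.MapsTo φ (ball 0 1) (ball 0 1))
    (hφinvm : Set.MapsTo φinv (ball 0 1) (ball 0 1))
    (hleft : ∀ z ∈ ball (0 : ℂ) 1, φinv (φ z) = z)
    (hright : ∀ z ∈ ball (0 : ℂ) 1, φ (φinv z) = z)
    (a : ℂ) (ha : ‖a‖ = 1) (hfix : φ a = a)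
    (honly : ∀ z ∈ closedBall (0 : ℂ) 1, φ z = z → z = a) :
    ∃ c : ℝ, c ≠ 0 ∧ ∀ z ∈ ball (0:ℂ) 1, cay a (φ z) = cay a z + c * Complex.I := by
  obtain ⟨b, l, hb, hl, hform⟩ := aut_form φ φinv hφ hφinv hφm hφinvm hleft hright
  have hform' : Set.EqOn (fun z => φ z * (1 - (starRingEnd ℂ) b * z)) (fun z => l * (z - b))
      (closedBall 0 1) := by
    refine Set.EqOn.of_subset_closure (s := ball 0 1) hform (by fun_prop) (by fun_prop)
      ball_subset_closedBall ?_
    rw [closure_ball _ one_ne_zero]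
  have hacl : a ∈ closedBall (0:ℂ) 1 := by simp [ha]
  have ha0 : a ≠ 0 := by intro h; simp [h] at ha
  have hb0 : b ≠ 0 := by
    intro h
    have h1 := hform 0 (by simp)
    simp [h] at h1
    exact ha0 (honly 0 (by simp) h1).symm
  have hcb0 : (starRingEnd ℂ) b ≠ 0 := by simpa using hb0
  have hA := hform' hacl
  simp only [hfix] at hA
  -- the other fixed point
  obtain ⟨a', ha'⟩ : ∃ a', a' = (1 - l) / (starRingEnd ℂ) b - a := ⟨_, rfl⟩
  have hs : (starRingEnd ℂ) b * (a' + a) = 1 - l := by rw [ha']; field_simp; ring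
  have hp : (starRingEnd ℂ) b * (a' * a) = - l * b := by
    linear_combination a * hs + hA
  have hna' : ‖a'‖ = 1 := by
    have := congrArg norm hp
    simp [hl, ha] at this
    simpa [hb0] using this
  have hcl' : a' ∈ closedBall (0:ℂ) 1 := by simp [hna']
  have hA' := hform' hcl'
  simp only at hA'
  have hfix' : φ a' = a' := by
    apply mul_right_cancel₀ (mob_den hb hna'.le)
    rw [hA']
    linear_combination a' * hs - hp
  have haa' := honly a' hcl' hfix'
  rw [haa'] at hs hp
  have hd : 1 - (starRingEnd ℂ) b * a ≠ 0 := mob_den hb ha.le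
  obtain ⟨k, hk⟩ : ∃ k, k = 2 * a * (starRingEnd ℂ) b / (1 - (starRingEnd ℂ) b * a) := ⟨_, rfl⟩
  have hk0 : k ≠ 0 := by
    rw [hk]; exact div_ne_zero (by simp [ha0, hb0]) hd
  have hkl : k * (1 + l) = 2 * (1 - l) := by
    have hk1 : k * (1 - (starRingEnd ℂ) b * a) = 2 * a * (starRingEnd ℂ) b := by
      rw [hk]; exact div_mul_cancel₀ _ hd
    linear_combination 2 * hk1 + (k + 2) * hs
  have hl1 : 1 + l ≠ 0 := by
    intro h; apply hd; linear_combination (-1/2 : ℂ) * hs + 1/2 * h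
  have hll : l * (starRingEnd ℂ) l = 1 := by
    rw [Complex.mul_conj, Complex.normSq_eq_norm_sq, hl]; simp
  have hkc : (starRingEnd ℂ) k = - k := by
    have h2 := congrArg (starRingEnd ℂ) hkl
    simp only [map_mul, map_add, map_sub, map_one, map_ofNat] at h2
    apply mul_right_cancel₀ hl1
    linear_combination l * h2 + hkl - ((starRingEnd ℂ) k + 2) * hll
  have hkre : k.re = 0 := by
    have := congrArg Complex.re hkc
    simp at this
    linarith
  have hkI : k = (k.im : ℂ) * Complex.I := by
    apply Complex.ext <;> simp [hkre]
  refine ⟨k.im, fun h => hk0 (by rw [hkI, h]; simp), fun z hz => ?_⟩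
  rw [← hkI]
  have d1 := cay_den ha (mem_ball_zero_iff.mp hz)
  have d2 := cay_den ha (mem_ball_zero_iff.mp (hφm hz))
  have hz1 := hform z hz
  have hdz := mob_den hb (mem_ball_zero_iff.mp hz).le
  have key : (a - φ z) * (1 - (starRingEnd ℂ) b * z) = (1 - (starRingEnd ℂ) b * a) * (a - z) := by
    linear_combination -hz1 - z * hs + hp
  have c1 : cay a (φ z) = 2 * a / (a - φ z) - 1 := by unfold cay; field_simp; ring
  have c2 : cay a z = 2 * a / (a - z) - 1 := by unfold cay; field_simp; ring
  have c3 : 1 / (a - φ z) = (1 - (starRingEnd ℂ) b * z) / ((1 - (starRingEnd ℂ) b * a) * (a - z)) := by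
    rw [← key]; field_simp
  have c4 : 2 * a / (a - φ z) = 2 * a * (1 / (a - φ z)) := by ring
  rw [c1, c2, c4, c3, hk]
  obtain ⟨D, hD⟩ : ∃ D, D = 1 - (starRingEnd ℂ) b * a := ⟨_, rfl⟩
  rw [← hD] at hd ⊢
  field_simp
  rw [hD]
  ring

lemma iter_cay (f : ℂ → ℂ) (a t : ℂ) (hm : Set.MapsTo f (ball 0 1) (ball 0 1))
    (h : ∀ z ∈ ball (0:ℂ) 1, cay a (f z) = cay a z + t) (n : ℕ) (z : ℂ)
    (hz : z ∈ ball (0:ℂ) 1) : f^[n] z ∈ ball (0:ℂ) 1 ∧ cay a (f^[n] z) = cay a z + n * t := by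
  induction n with
  | zero => simpa using hz
  | succ n ih =>
    rw [Function.iterate_succ_apply']
    refine ⟨hm ih.1, ?_⟩
    rw [h _ ih.1, ih.2]; push_cast; ring

/-- If `φ` is a parabolic automorphism of the unit disc with unique fixed point `a` on the
boundary, then for every `δ ∈ (0,1)` there is `z₀ ∈ 𝔻` whose orbit `(φ_j(z₀))_{j ∈ ℤ}` is
pseudo-hyperbolically separated: `d(φ_{j₁}(z₀), φ_{j₂}(z₀)) > δ` whenever `j₁ ≠ j₂`. -/
theorem stmt13 (φ φinv : ℂ → ℂ)
    (hφc : ContinuousOn φ (closedBall 0 1))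
    (hφ : DifferentiableOn ℂ φ (ball 0 1))
    (hφinv : DifferentiableOn ℂ φinv (ball 0 1))
    (hφm : Set.MapsTo φ (ball 0 1) (ball 0 1))
    (hφinvm : Set.MapsTo φinv (ball 0 1) (ball 0 1))
    (hleft : ∀ z ∈ ball (0 : ℂ) 1, φinv (φ z) = z)
    (hright : ∀ z ∈ ball (0 : ℂ) 1, φ (φinv z) = z)
    (a : ℂ) (ha : ‖a‖ = 1) (hfix : φ a = a)
    (honly : ∀ z ∈ closedBall (0 : ℂ) 1, φ z = z → z = a)
    (δ : ℝ) (hδ : δ ∈ Set.Ioo (0 : ℝ) 1) :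
    ∃ z₀ ∈ ball (0 : ℂ) 1, ∀ j₁ j₂ : ℤ, j₁ ≠ j₂ →
      δ < ‖(iterZ φ φinv j₁ z₀ - iterZ φ φinv j₂ z₀) /
            (1 - (starRingEnd ℂ) (iterZ φ φinv j₂ z₀) * iterZ φ φinv j₁ z₀)‖ := by
  obtain ⟨c, hc, hW⟩ := parab φ φinv hφc hφ hφinv hφm hφinvm hleft hright a ha hfix honly
  have hWi : ∀ z ∈ ball (0:ℂ) 1, cay a (φinv z) = cay a z + (-(c * Complex.I)) := by
    intro z hz
    have := hW _ (hφinvm hz)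
    rw [hright z hz] at this
    rw [this]; ring
  have hit : ∀ (k : ℤ) (z : ℂ), z ∈ ball (0:ℂ) 1 → iterZ φ φinv k z ∈ ball (0:ℂ) 1 ∧
      cay a (iterZ φ φinv k z) = cay a z + k * (c * Complex.I) := by
    intro k z hz
    unfold iterZ
    split_ifs with hk
    · have h := iter_cay φ a _ hφm hW k.toNat z hz
      have e : ((k.toNat : ℕ) : ℂ) = (k : ℂ) := by exact_mod_cast congrArg (Int.cast (R := ℂ)) (Int.toNat_of_nonneg hk)
      rwa [e] at h
    · have h := iter_cay φinv a _ hφinvm hWi (-k).toNat z hz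
      have e : (((-k).toNat : ℕ) : ℂ) = -(k : ℂ) := by
        exact_mod_cast congrArg (Int.cast (R := ℂ)) (Int.toNat_of_nonneg (by omega : 0 ≤ -k))
      rw [e] at h
      refine ⟨h.1, ?_⟩
      rw [h.2]; ring
  obtain ⟨hδ0, hδ1⟩ := hδ
  obtain ⟨x, hx⟩ : ∃ x, x = |c| * (1 - δ) / 2 := ⟨_, rfl⟩
  have hcpos := abs_pos.mpr hc
  have hx0 : 0 < x := by rw [hx]; have : 0 < 1 - δ := by linarith
                         positivity
  have ha0 : a ≠ 0 := by intro h; simp [h] at ha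
  have hx1 : (x : ℂ) + 1 ≠ 0 := by
    have : x + 1 ≠ 0 := by positivity
    exact_mod_cast this
  have hr : |(x - 1) / (x + 1)| < 1 := by
    rw [abs_div, abs_of_pos (by linarith : 0 < x + 1), div_lt_one (by linarith), abs_lt]
    constructor <;> linarith
  have hz0 : a * (((x - 1) / (x + 1) : ℝ) : ℂ) ∈ ball (0:ℂ) 1 := by
    rw [mem_ball_zero_iff, norm_mul, ha, one_mul, Complex.norm_real]
    exact hr
  have hcz : cay a (a * (((x - 1) / (x + 1) : ℝ) : ℂ)) = x := by
    have := cay_den ha (mem_ball_zero_iff.mp hz0)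
    rw [cay, div_eq_iff this]
    push_cast
    field_simp
    ring
  refine ⟨_, hz0, fun j₁ j₂ hj => ?_⟩
  obtain ⟨b1, w1⟩ := hit j₁ _ hz0
  obtain ⟨b2, w2⟩ := hit j₂ _ hz0
  rw [cay_dist ha (mem_ball_zero_iff.mp b1) (mem_ball_zero_iff.mp b2), w1, w2, hcz]
  obtain ⟨n, hn⟩ : ∃ n : ℤ, n = j₁ - j₂ := ⟨_, rfl⟩
  have hn0 : n ≠ 0 := by omega
  have hn2 : (1:ℝ) ≤ (n:ℝ) ^ 2 := by
    have : 1 ≤ n ^ 2 := by have := sq_pos_of_ne_zero hn0; omega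
    exact_mod_cast this
  have E1 : (x:ℂ) + j₁ * (c * Complex.I) - (x + j₂ * (c * Complex.I)) = ⟨0, n * c⟩ := by
    apply Complex.ext <;> simp [hn]; ring
  have E2 : (x:ℂ) + j₁ * (c * Complex.I) + (starRingEnd ℂ) (x + j₂ * (c * Complex.I))
      = ⟨2 * x, n * c⟩ := by
    apply Complex.ext <;> simp [hn] <;> ring
  rw [E1, E2, norm_div]
  have hpos : 0 < ‖(⟨2 * x, n * c⟩ : ℂ)‖ := by
    rw [norm_pos_iff]; intro h
    have := congrArg Complex.re h
    simp at this; linarith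
  rw [lt_div_iff₀ hpos]
  refine lt_of_pow_lt_pow_left₀ 2 (norm_nonneg _) ?_
  rw [mul_pow, ← Complex.normSq_eq_norm_sq, ← Complex.normSq_eq_norm_sq, Complex.normSq_mk,
    Complex.normSq_mk]
  have hx2 : 4 * x ^ 2 = c ^ 2 * (1 - δ) ^ 2 := by
    rw [hx, ← sq_abs c]; ring
  have hc2 : 0 < c ^ 2 := by positivity
  have h1 : c ^ 2 * (1 - δ ^ 2) ≤ n ^ 2 * (c ^ 2 * (1 - δ ^ 2)) :=
    le_mul_of_one_le_left (mul_nonneg hc2.le (by nlinarith)) hn2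
  have h2 : δ ^ 2 * (4 * x ^ 2) < c ^ 2 * (1 - δ ^ 2) := by
    rw [hx2]
    have : δ ^ 2 * (1 - δ) ^ 2 < 1 - δ ^ 2 := by
      have p : 0 < (1 - δ) := by linarith
      have q : δ ^ 2 * (1 - δ) < 1 + δ := by nlinarith [mul_pos hδ0 hδ0, mul_pos p hδ0, mul_pos (mul_pos hδ0 hδ0) hδ0]
      nlinarith
    nlinarith
  nlinarith
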